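/- Let h : P → Q be an integral homomorphism of integral commutative monoids, R an integral commutative monoid, and g : P → R any monoid homomorphism. Then the induced homomorphism R → R ⊔_P Q into the pushout (taken in the category of commutative monoids) is again an integral homomorphism. -/

import Mathlib

/-!
The proof rests on an explicit model of the pushout. When `h` is integral, the relation on
`R × Q` given by `(r₁, q₁) ∼ (r₂, q₂)` iff there are `a b : P` and `q : Q` with
`q₁ = h a + q`, `q₂ = h b + q` and `r₁ + g a = r₂ + g b` is already transitive, so it is a
congruence (`pushoutCon`), and the quotient receives compatible maps from `Q` and `R`.
Hence the universal property maps any pushout `T` to this quotient, so that an equality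
`inR r₁ + inQ q₁ = inR r₂ + inQ q₂` in `T` forces `(r₁, q₁) ∼ (r₂, q₂)`
(`IsMonoidPushout.exists_of_eq`). Every element of `T` has the form `inR r + inQ q`
(`IsMonoidPushout.exists_eq_add`), and integrality of `inR` is read off from the witnesses
of the relation.
-/

/-!
STATEMENT 2: Let `h : P → Q` be an integral homomorphism of integral commutative monoids,
`R` an integral commutative monoid, and `g : P → R` any monoid homomorphism. Then the
induced homomorphism `R → R ⊔_P Q` into the pushout (taken in the category of commutative
monoids) is again an integral homomorphism.
-/

universe u

/-- A commutative monoid (written additively) is *integral* (cancellative) if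
`a + c = b + c` implies `a = b`. -/
def IsIntegralMonoid (M : Type u) [AddCommMonoid M] : Prop :=
  ∀ a b c : M, a + c = b + c → a = b

/-- A homomorphism `h : P → Q` of commutative monoids is *integral* if whenever
`h p₁ + q₁ = h p₂ + q₂`, there exist `p₃ p₄ : P` and `q : Q` such that
`q₁ = h p₃ + q`, `q₂ = h p₄ + q` and `p₁ + p₃ = p₂ + p₄`. -/
def IsIntegralHom {P Q : Type u} [AddCommMonoid P] [AddCommMonoid Q] (h : P →+ Q) : Prop :=
  ∀ (p₁ p₂ : P) (q₁ q₂ : Q), h p₁ + q₁ = h p₂ + q₂ →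
    ∃ (p₃ p₄ : P) (q : Q), q₁ = h p₃ + q ∧ q₂ = h p₄ + q ∧ p₁ + p₃ = p₂ + p₄

/-- `(T, inQ, inR)` is a pushout of `h : P →+ Q` along `g : P →+ R` in the category of
commutative monoids: the square commutes and it satisfies the universal property. -/
structure IsMonoidPushout {P Q R T : Type u}
    [AddCommMonoid P] [AddCommMonoid Q] [AddCommMonoid R] [AddCommMonoid T]
    (h : P →+ Q) (g : P →+ R) (inQ : Q →+ T) (inR : R →+ T) : Prop where
  comm : inQ.comp h = inR.comp g
  desc : ∀ (X : Type u) [AddCommMonoid X] (fQ : Q →+ X) (fR : R →+ X),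
    fQ.comp h = fR.comp g → ∃! d : T →+ X, d.comp inQ = fQ ∧ d.comp inR = fR

/-- The congruence on `R × Q` whose quotient is the pushout of an integral homomorphism
`h : P →+ Q` along `g : P →+ R`: two pairs are related when each arises from a common
`q : Q` by moving an element of `P` across the two factors. -/
def pushoutCon {P Q R : Type u} [AddCommMonoid P] [AddCommMonoid Q] [AddCommMonoid R]
    (h : P →+ Q) (hh : IsIntegralHom h) (g : P →+ R) : AddCon (R × Q) where
  r x y := ∃ (a b : P) (q : Q), x.2 = h a + q ∧ y.2 = h b + q ∧ x.1 + g a = y.1 + g b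
  iseqv := by
    refine ⟨fun x => ⟨0, 0, x.2, by simp, by simp, rfl⟩, ?_, ?_⟩
    · rintro x y ⟨a, b, q, h1, h2, h3⟩
      exact ⟨b, a, q, h2, h1, h3.symm⟩
    · rintro x y z ⟨a, b, q, h1, h2, h3⟩ ⟨c, d, q', h4, h5, h6⟩
      -- Integrality of `h` refines the two decompositions of `y.2` to a common one.
      obtain ⟨e, f, q'', rfl, rfl, h7⟩ := hh b c q q' (h2.symm.trans h4)
      refine ⟨a + e, d + f, q'', by rw [h1, map_add, add_assoc],
        by rw [h5, map_add, add_assoc], ?_⟩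
      calc x.1 + g (a + e) = y.1 + g (b + e) := by
            rw [map_add, map_add, ← add_assoc, h3, add_assoc]
        _ = y.1 + g (c + f) := by rw [h7]
        _ = z.1 + g (d + f) := by
            rw [map_add, map_add, ← add_assoc, h6, add_assoc]
  add' := by
    rintro w x y z ⟨a, b, q, h1, h2, h3⟩ ⟨c, d, q', h4, h5, h6⟩
    refine ⟨a + c, b + d, q + q', ?_, ?_, ?_⟩
    · rw [Prod.snd_add, h1, h4, map_add, add_add_add_comm]
    · rw [Prod.snd_add, h2, h5, map_add, add_add_add_comm]
    · rw [Prod.fst_add, Prod.fst_add, map_add, map_add, add_add_add_comm, h3, h6,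
        add_add_add_comm]

/-- In the pushout of an integral homomorphism, the only identifications between sums
`inR r + inQ q` are those of `pushoutCon`. -/
theorem IsMonoidPushout.exists_of_eq {P Q R T : Type u}
    [AddCommMonoid P] [AddCommMonoid Q] [AddCommMonoid R] [AddCommMonoid T]
    {h : P →+ Q} (hh : IsIntegralHom h) {g : P →+ R} {inQ : Q →+ T} {inR : R →+ T}
    (hpo : IsMonoidPushout h g inQ inR) {r₁ r₂ : R} {q₁ q₂ : Q}
    (heq : inR r₁ + inQ q₁ = inR r₂ + inQ q₂) :
    ∃ (a b : P) (q : Q), q₁ = h a + q ∧ q₂ = h b + q ∧ r₁ + g a = r₂ + g b := by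
  let c := pushoutCon h hh g
  obtain ⟨d, ⟨hdQ, hdR⟩, -⟩ := hpo.desc c.Quotient
    (c.mk'.comp (AddMonoidHom.inr R Q)) (c.mk'.comp (AddMonoidHom.inl R Q)) (by
      ext p
      exact (AddCon.eq c).2 ⟨p, 0, 0, by simp, by simp, by simp⟩)
  have key (r : R) (q : Q) : d (inR r + inQ q) = c.mk' (r, q) := by
    have hQ := DFunLike.congr_fun hdQ q
    have hR := DFunLike.congr_fun hdR r
    simp only [AddMonoidHom.comp_apply, AddMonoidHom.inr_apply,
      AddMonoidHom.inl_apply] at hQ hR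
    rw [map_add, hQ, hR, ← map_add, Prod.mk_add_mk, add_zero, zero_add]
  have hd := congrArg d heq
  rw [key, key] at hd
  exact (AddCon.eq c).1 hd

/-- The two structure maps jointly generate the pushout: since the submonoid of sums
`inR r + inQ q` receives both of them, the identity of `T` factors through it. -/
theorem IsMonoidPushout.exists_eq_add {P Q R T : Type u}
    [AddCommMonoid P] [AddCommMonoid Q] [AddCommMonoid R] [AddCommMonoid T]
    {h : P →+ Q} {g : P →+ R} {inQ : Q →+ T} {inR : R →+ T}
    (hpo : IsMonoidPushout h g inQ inR) (t : T) :
    ∃ (r : R) (q : Q), t = inR r + inQ q := by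
  let S := AddMonoidHom.mrange (inR.coprod inQ)
  let fQ : Q →+ S := inQ.codRestrict S fun q => ⟨(0, q), by simp⟩
  let fR : R →+ S := inR.codRestrict S fun r => ⟨(r, 0), by simp⟩
  obtain ⟨d, ⟨hdQ, hdR⟩, -⟩ := hpo.desc S fQ fR (by
    ext p
    exact DFunLike.congr_fun hpo.comm p)
  have hid : S.subtype.comp d = AddMonoidHom.id T := by
    refine (hpo.desc T inQ inR hpo.comm).unique ⟨?_, ?_⟩ ⟨rfl, rfl⟩
    · rw [AddMonoidHom.comp_assoc, hdQ]; rfl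
    · rw [AddMonoidHom.comp_assoc, hdR]; rfl
  obtain ⟨⟨r, q⟩, hrq⟩ := (d t).2
  exact ⟨r, q, (hrq.trans (DFunLike.congr_fun hid t)).symm⟩

/-- Integral homomorphisms are stable under cobase change: the induced map
`R → R ⊔_P Q` into the pushout of an integral homomorphism `h` is integral. -/
theorem isIntegralHom_pushout_inr {P Q R T : Type u}
    [AddCommMonoid P] [AddCommMonoid Q] [AddCommMonoid R] [AddCommMonoid T]
    (hP : IsIntegralMonoid P) (hQ : IsIntegralMonoid Q) (hR : IsIntegralMonoid R)
    (h : P →+ Q) (hh : IsIntegralHom h) (g : P →+ R)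
    (inQ : Q →+ T) (inR : R →+ T) (hpo : IsMonoidPushout h g inQ inR) :
    IsIntegralHom inR := by
  intro r₁ r₂ t₁ t₂ heq
  obtain ⟨s₁, q₁, rfl⟩ := hpo.exists_eq_add t₁
  obtain ⟨s₂, q₂, rfl⟩ := hpo.exists_eq_add t₂
  rw [← add_assoc, ← add_assoc, ← map_add, ← map_add] at heq
  obtain ⟨a, b, q, rfl, rfl, hab⟩ := hpo.exists_of_eq hh heq
  have hc (p : P) : inQ (h p) = inR (g p) := DFunLike.congr_fun hpo.comm p
  refine ⟨s₁ + g a, s₂ + g b, inQ q, ?_, ?_, ?_⟩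
  · rw [map_add, map_add, hc, add_assoc]
  · rw [map_add, map_add, hc, add_assoc]
  · rw [← add_assoc, ← add_assoc, hab]
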